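/- Let m, k, n, r be natural numbers with 1 ≤ m ≤ k < n and r ≥ 1. If (r : ℝ) ≤ √(m·(n/k - 2)), then (n : ℝ) ≥ ⌈(k+1)/m⌉ · (m + (r² - r)/2), where ⌈(k+1)/m⌉ is the ceiling of the rational number (k+1)/m and all arithmetic in the conclusion is over the real numbers. -/

import Mathlib

/-! Write `C = ⌈(k+1)/m⌉`. Integrality gives `m * C ≤ k + m`. Since `r ≥ 1`, the radicand is positive,
so the hypothesis can be squared to `k * r² + 2 * k * m ≤ m * n`. As `m ≤ k`, this yields
`(k + m) * (m + (r² - r) / 2) ≤ 2 * k * (m + (r² - r) / 2) ≤ m * n`, and dividing by `m` finishes. -/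

/-- The usual bound `⌈a/m⌉ ≤ (a + m - 1)/m` with `a = k + 1`, cleared of denominators. -/
lemma mul_ceil_le (m k : ℕ) (hm : 1 ≤ m) :
    (m : ℤ) * ⌈((k : ℚ) + 1) / (m : ℚ)⌉ ≤ k + m := by
  have hm0 : (0 : ℚ) < m := by exact_mod_cast hm
  have h := Int.ceil_lt_add_one (((k : ℚ) + 1) / (m : ℚ))
  have h2 : (m : ℚ) * (⌈((k : ℚ) + 1) / (m : ℚ)⌉ : ℚ) < k + 1 + m := by
    calc _ < (m : ℚ) * (((k : ℚ) + 1) / (m : ℚ) + 1) := mul_lt_mul_of_pos_left h hm0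
      _ = k + 1 + m := by field_simp
  have h3 : (m : ℤ) * ⌈((k : ℚ) + 1) / (m : ℚ)⌉ < k + 1 + m := by exact_mod_cast h2
  omega

theorem stmt_4 (m k n r : ℕ) (hm : 1 ≤ m) (hmk : m ≤ k) (hkn : k < n)
    (hr : 1 ≤ r)
    (hle : (r : ℝ) ≤ Real.sqrt ((m : ℝ) * ((n : ℝ) / (k : ℝ) - 2))) :
    (n : ℝ) ≥ (⌈((k : ℚ) + 1) / (m : ℚ)⌉ : ℝ) * ((m : ℝ) + ((r : ℝ) ^ 2 - (r : ℝ)) / 2) := by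
  have hC : (m : ℝ) * (⌈((k : ℚ) + 1) / (m : ℚ)⌉ : ℝ) ≤ k + m := by
    exact_mod_cast mul_ceil_le m k hm
  generalize (⌈((k : ℚ) + 1) / (m : ℚ)⌉ : ℝ) = C at hC ⊢
  have hm0 : (0 : ℝ) < m := by exact_mod_cast hm
  have hmk' : (m : ℝ) ≤ k := by exact_mod_cast hmk
  have hk0 : (0 : ℝ) < k := hm0.trans_le hmk'
  have hr1 : (1 : ℝ) ≤ r := by exact_mod_cast hr
  -- `r > 0` rules out a negative radicand, where `Real.sqrt` would be `0`.
  have hsq : (r : ℝ) ^ 2 ≤ m * ((n : ℝ) / k - 2) := (Real.le_sqrt' (by linarith)).1 hle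
  have hkey : (k : ℝ) * r ^ 2 + 2 * k * m ≤ m * n := by
    have h := mul_le_mul_of_nonneg_left hsq hk0.le
    have e : (k : ℝ) * (m * ((n : ℝ) / k - 2)) = m * n - 2 * k * m := by
      field_simp
    linarith
  set D : ℝ := (m : ℝ) + ((r : ℝ) ^ 2 - r) / 2 with hD
  have hD0 : 0 ≤ D := by nlinarith
  refine le_of_mul_le_mul_left ?_ hm0
  calc (m : ℝ) * (C * D) = m * C * D := by ring
    _ ≤ (k + m) * D := mul_le_mul_of_nonneg_right hC hD0
    _ ≤ (2 * k) * D := mul_le_mul_of_nonneg_right (by linarith) hD0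
    _ = k * r ^ 2 + 2 * k * m - k * r := by rw [hD]; ring
    _ ≤ m * n := by nlinarith
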